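/- Let n ≥ 1 and let p, q : Fin n → (Fin 2 → ℂ) be families of nonzero vectors, representing two points of (ℙ¹(ℂ))ⁿ, and assume p (n-1) 1 ≠ 0 and q (n-1) 1 ≠ 0 (the last coordinates are not [1 : 0]). Then the following are equivalent: (i) there exists x ∈ ℂ such that for every i ∈ Fin n the point of ℙ¹(ℂ) determined by (!![1, x; 0, 1]).mulVec (p i) equals the point determined by q i (i.e. the two tuples lie in the same orbit of the diagonal action of the unipotent group U = { (1 x; 0 1) } on (ℙ¹(ℂ))ⁿ); (ii) for every i ∈ Fin n one has p i 1 = 0 if and only if q i 1 = 0, and for all i, j ∈ Fin n with p i 1 ≠ 0 and p j 1 ≠ 0 one has (p i 0)/(p i 1) − (p j 0)/(p j 1) = (q i 0)/(q i 1) − (q j 0)/(q j 1). -/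

import Mathlib

/-- A unipotent matrix `(1 x; 0 1)` sends nonzero vectors to nonzero vectors. -/
lemma unipotent_mulVec_ne_zero_of_ne_zero (x : ℂ) (v : Fin 2 → ℂ) (hv : v ≠ 0) :
    (!![1, x; 0, 1] : Matrix (Fin 2) (Fin 2) ℂ).mulVec v ≠ 0 := by
  intro h
  apply hv
  have h0 := congrFun h 0
  have h1 := congrFun h 1
  simp [Matrix.mulVec, dotProduct, Fin.sum_univ_two] at h0 h1
  funext i
  fin_cases i
  · simpa [h1] using h0
  · simpa using h1

lemma unipotent_mk_eq_iff_aux (x : ℂ) (v w : Fin 2 → ℂ) (hv : v ≠ 0) (hw : w ≠ 0) :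
    Projectivization.mk ℂ ((!![1, x; 0, 1] : Matrix (Fin 2) (Fin 2) ℂ).mulVec v)
        (unipotent_mulVec_ne_zero_of_ne_zero x v hv) = Projectivization.mk ℂ w hw ↔
      ((v 1 = 0 ↔ w 1 = 0) ∧ (v 1 ≠ 0 → w 0 / w 1 = v 0 / v 1 + x)) := by
  have key : ∀ a : ℂ, a • w = (!![1, x; 0, 1] : Matrix (Fin 2) (Fin 2) ℂ).mulVec v ↔
      (a * w 0 = v 0 + x * v 1 ∧ a * w 1 = v 1) := by
    intro a
    rw [funext_iff, Fin.forall_fin_two]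
    simp [Matrix.mulVec, dotProduct, Fin.sum_univ_two]
  constructor
  · intro h
    rw [Projectivization.mk_eq_mk_iff] at h
    obtain ⟨a, ha⟩ := h
    have ha0 : (a : ℂ) ≠ 0 := a.ne_zero
    obtain ⟨h0, h1⟩ := (key (a : ℂ)).1 ha
    have hiff : v 1 = 0 ↔ w 1 = 0 := by
      rw [← h1]
      simp [ha0]
    refine ⟨hiff, fun hv1 => ?_⟩
    have hw1 : w 1 ≠ 0 := fun h => hv1 (hiff.2 h)
    have e : v 0 = a * w 0 - x * v 1 := by rw [h0]; ring
    rw [e, ← h1]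
    field_simp
    ring
  · rintro ⟨hiff, h⟩
    rw [Projectivization.mk_eq_mk_iff']
    by_cases hv1 : v 1 = 0
    · have hw1 := hiff.1 hv1
      have hw0 : w 0 ≠ 0 := by
        intro hw0
        apply hw
        funext i
        fin_cases i
        · exact hw0
        · exact hw1
      refine ⟨v 0 / w 0, (key _).2 ⟨?_, ?_⟩⟩
      · rw [hv1]
        field_simp
        ring
      · rw [hw1, hv1, mul_zero]
    · have hw1 : w 1 ≠ 0 := fun h => hv1 (hiff.2 h)
      have h2 := h hv1
      refine ⟨v 1 / w 1, (key _).2 ⟨?_, ?_⟩⟩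
      · calc v 1 / w 1 * w 0 = v 1 * (w 0 / w 1) := by ring
          _ = v 0 + x * v 1 := by
            rw [h2]
            field_simp
      · field_simp

/-- Two `n`-tuples of points of `ℙ¹(ℂ)` whose last coordinates differ from `[1 : 0]`
lie in the same orbit of the diagonal action of the unipotent group
`U = {(1 x; 0 1)} ⊂ SL(2,ℂ)` if and only if, coordinatewise, `[1 : 0]` occurs at the same
places and the differences of the affine coordinates of the remaining points agree. -/
theorem unipotent_diagonal_orbit_iff (n : ℕ) (hn : 1 ≤ n)
    (p q : Fin n → (Fin 2 → ℂ))
    (hp : ∀ i, p i ≠ 0) (hq : ∀ i, q i ≠ 0)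
    (hpn : p ⟨n - 1, by omega⟩ 1 ≠ 0) (hqn : q ⟨n - 1, by omega⟩ 1 ≠ 0) :
    (∃ x : ℂ, ∀ i : Fin n,
        Projectivization.mk ℂ ((!![1, x; 0, 1] : Matrix (Fin 2) (Fin 2) ℂ).mulVec (p i))
            (unipotent_mulVec_ne_zero_of_ne_zero x (p i) (hp i)) =
          Projectivization.mk ℂ (q i) (hq i)) ↔
      ((∀ i : Fin n, p i 1 = 0 ↔ q i 1 = 0) ∧
        ∀ i j : Fin n, p i 1 ≠ 0 → p j 1 ≠ 0 →
          p i 0 / p i 1 - p j 0 / p j 1 = q i 0 / q i 1 - q j 0 / q j 1) := by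
  constructor
  · rintro ⟨x, h'⟩
    have h := fun i => (unipotent_mk_eq_iff_aux x (p i) (q i) (hp i) (hq i)).1 (h' i)
    refine ⟨fun i => (h i).1, fun i j hi hj => ?_⟩
    rw [(h i).2 hi, (h j).2 hj]
    ring
  · rintro ⟨h1, h2⟩
    refine ⟨q ⟨n - 1, by omega⟩ 0 / q ⟨n - 1, by omega⟩ 1 -
      p ⟨n - 1, by omega⟩ 0 / p ⟨n - 1, by omega⟩ 1, fun i =>
        (unipotent_mk_eq_iff_aux _ (p i) (q i) (hp i) (hq i)).2 ⟨h1 i, fun hi => ?_⟩⟩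
    have := h2 i ⟨n - 1, by omega⟩ hi hpn
    linear_combination -this
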